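/- Let F be a finite field of characteristic p, q = p^f with f ≥ 1, let h be an integer with 0 ≤ h ≤ q-2, and let λ ∈ F^×. Assume it is not the case that both h = 0 and λ = 1. If x ∈ F((T)) is a Laurent series whose coefficient of T^n vanishes unless (q-1) divides n, and which satisfies λ·φ_q(x) = T^{(q-1)h}·x, then x = 0. Consequently, for every y ∈ F((T)) the equation x - λ·T^{-(q-1)h}·φ_q(x) = y has at most one solution x among Laurent series supported on multiples of q-1. -/

import Mathlib

/-!
Compare lowest terms in `λ·φ_q(x) = T^{(q-1)h}·x` for `x ≠ 0` of order `d`. The left side has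
order `q·d` and leading coefficient `λ·x_d`, the right side has order `(q-1)h + d` and leading
coefficient `x_d`. Hence `d = h` and `λ = 1`; if `x` is supported on multiples of `q-1`, then
`q-1` divides `h`, which for `0 ≤ h ≤ q-2` forces `h = 0`.
-/

section HahnSeries

open HahnSeries

variable {Γ Γ' R : Type*}

section EmbDomain

variable [PartialOrder Γ'] [Zero R]

theorem order_embDomain [LinearOrder Γ] [Zero Γ] [Zero Γ'] (σ : Γ ↪o Γ') {x : HahnSeries Γ R}
    (hx : x ≠ 0) : (embDomain σ x).order = σ x.order := by
  have hσx : embDomain σ x ≠ 0 := fun h ↦ hx (embDomain_injective (h.trans embDomain_zero.symm))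
  rw [← WithTop.coe_eq_coe, order_eq_orderTop_of_ne_zero hσx, orderTop_embDomain,
    ← order_eq_orderTop_of_ne_zero hx, WithTop.map_coe]

theorem leadingCoeff_embDomain [LinearOrder Γ] (σ : Γ ↪o Γ') (x : HahnSeries Γ R) :
    (embDomain σ x).leadingCoeff = x.leadingCoeff := by
  rw [leadingCoeff, leadingCoeff, orderTop_embDomain]
  cases x.orderTop with
  | top => rfl
  | coe a => exact embDomain_coeff

theorem eq_embDomain_of_coeff [PartialOrder Γ] (σ : Γ ↪o Γ') {x : HahnSeries Γ R}
    {y : HahnSeries Γ' R} (hrange : ∀ a, y.coeff (σ a) = x.coeff a)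
    (hcompl : ∀ b ∉ Set.range σ, y.coeff b = 0) : y = embDomain σ x := by
  ext b
  by_cases hb : b ∈ Set.range σ
  · obtain ⟨a, rfl⟩ := hb
    rw [hrange, embDomain_coeff]
  · rw [hcompl b hb, embDomain_of_notMem_range hb]

end EmbDomain

section Equation

variable [AddCommGroup Γ] [CommRing R]

theorem sub_smul_single_neg_mul_eq_zero_iff [PartialOrder Γ] [IsOrderedAddMonoid Γ] (a : Γ)
    (c : R) (x y : HahnSeries Γ R) :
    x - c • (single (-a) (1 : R) * y) = 0 ↔ c • y = single a (1 : R) * x := by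
  have hinv : single a (1 : R) * single (-a) (1 : R) = 1 := by
    rw [single_mul_single, add_neg_cancel, mul_one, single_zero_one]
  rw [sub_eq_zero, ← mul_smul_comm]
  constructor
  · intro h
    rw [h, ← mul_assoc, hinv, one_mul]
  · intro h
    rw [h, ← mul_assoc, mul_comm (single (-a) (1 : R)), hinv, one_mul]

variable [LinearOrder Γ] [IsOrderedAddMonoid Γ] [NoZeroDivisors R]
  {σ : Γ ↪o Γ} {a : Γ} {c : R} {x : HahnSeries Γ R}

theorem eq_one_of_smul_embDomain_eq_single_mul (hx : x ≠ 0)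
    (h : c • embDomain σ x = single a (1 : R) * x) : c = 1 := by
  have hlead : c * x.leadingCoeff = 1 * x.leadingCoeff := by
    simpa only [← C_mul_eq_smul, leadingCoeff_mul, C_apply, leadingCoeff_of_single,
      leadingCoeff_embDomain] using congrArg leadingCoeff h
  exact mul_right_cancel₀ (leadingCoeff_ne_zero.mpr hx) hlead

theorem map_order_eq_add_of_smul_embDomain_eq_single_mul (hx : x ≠ 0)
    (h : c • embDomain σ x = single a (1 : R) * x) : σ x.order = a + x.order := by
  rw [eq_one_of_smul_embDomain_eq_single_mul hx h, one_smul] at h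
  rw [← order_embDomain σ hx, h, order_single_mul_of_isRegular isRegular_one hx]

end Equation

end HahnSeries

section LaurentSeries

open HahnSeries

variable {R : Type*} {q : ℤ}

/-- The `R`-linear map `φ_q : Σ c_n T^n ↦ Σ c_n T^{qn}`, encoded as the extension of coefficients
along the order embedding `n ↦ q n` of `ℤ`. -/
noncomputable def laurentDilation [Semiring R] (hq : 0 < q) :
    LaurentSeries R →ₗ[R] LaurentSeries R :=
  embDomainLinearMap (OrderEmbedding.ofStrictMono (q * ·) (strictMono_mul_left_of_pos hq))

theorem eq_laurentDilation_of_coeff [Semiring R] (hq : 0 < q)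
    {φ : LaurentSeries R → LaurentSeries R} (hmul : ∀ x n, (φ x).coeff (q * n) = x.coeff n)
    (hndvd : ∀ x m, ¬ q ∣ m → (φ x).coeff m = 0) : φ = laurentDilation hq := by
  funext x
  refine eq_embDomain_of_coeff _ (hmul x) fun m hm ↦ hndvd x m ?_
  rintro ⟨n, rfl⟩
  exact hm ⟨n, rfl⟩

variable [CommRing R] [NoZeroDivisors R] {h : ℤ} {c : R} {x : LaurentSeries R}

theorem order_eq_of_smul_laurentDilation_eq (hq : 1 < q) (hx : x ≠ 0)
    (he : c • laurentDilation (zero_lt_one.trans hq) x = single ((q - 1) * h) (1 : R) * x) :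
    x.order = h := by
  have hord : q * x.order = (q - 1) * h + x.order :=
    map_order_eq_add_of_smul_embDomain_eq_single_mul hx he
  exact mul_left_cancel₀ (sub_pos.mpr hq).ne' (by linear_combination hord)

theorem eq_zero_of_smul_laurentDilation_eq (hq : 1 < q) (hne : ¬ (q - 1 ∣ h ∧ c = 1))
    (hsupp : ∀ n, ¬ q - 1 ∣ n → x.coeff n = 0)
    (he : c • laurentDilation (zero_lt_one.trans hq) x = single ((q - 1) * h) (1 : R) * x) :
    x = 0 := by
  by_contra hx
  have hdvd : q - 1 ∣ x.order := by
    by_contra hndvd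
    exact hx (coeff_order_eq_zero.mp (hsupp _ hndvd))
  rw [order_eq_of_smul_laurentDilation_eq hq hx he] at hdvd
  exact hne ⟨hdvd, eq_one_of_smul_embDomain_eq_single_mul hx he⟩

theorem statement10_general (hq : 1 < q) (φ : LaurentSeries R → LaurentSeries R)
    (hφmul : ∀ x n, (φ x).coeff (q * n) = x.coeff n)
    (hφndvd : ∀ x m, ¬ q ∣ m → (φ x).coeff m = 0)
    (hne : ¬ (q - 1 ∣ h ∧ c = 1)) :
    (∀ x : LaurentSeries R, (∀ n, ¬ q - 1 ∣ n → x.coeff n = 0) →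
      c • φ x = single ((q - 1) * h) (1 : R) * x → x = 0) ∧
    (∀ y x₁ x₂ : LaurentSeries R, (∀ n, ¬ q - 1 ∣ n → x₁.coeff n = 0) →
      (∀ n, ¬ q - 1 ∣ n → x₂.coeff n = 0) →
      x₁ - c • (single (-((q - 1) * h)) (1 : R) * φ x₁) = y →
      x₂ - c • (single (-((q - 1) * h)) (1 : R) * φ x₂) = y → x₁ = x₂) := by
  obtain rfl := eq_laurentDilation_of_coeff (zero_lt_one.trans hq) hφmul hφndvd
  refine ⟨fun x ↦ eq_zero_of_smul_laurentDilation_eq hq hne, fun y x₁ x₂ hx₁ hx₂ he₁ he₂ ↦ ?_⟩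
  refine sub_eq_zero.mp (eq_zero_of_smul_laurentDilation_eq (h := h) (c := c) hq hne ?_ ?_)
  · intro n hn
    rw [coeff_sub, hx₁ n hn, hx₂ n hn, sub_zero]
  · rw [← sub_smul_single_neg_mul_eq_zero_iff, map_sub, mul_sub, smul_sub]
    linear_combination he₁ - he₂

end LaurentSeries

/-- Unless `h = 0` and `λ = 1`, any Laurent series `x` supported on multiples of `q-1` with
`λ·φ_q(x) = T^{(q-1)h}·x` vanishes; consequently `x - λ·T^{-(q-1)h}·φ_q(x) = y` has at most
one solution supported on multiples of `q-1`.  Here `φ_q` is the `F`-linear map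
`Σ c_n T^n ↦ Σ c_n T^{qn}`, specified by its effect on coefficients. -/
theorem statement10 (p f q : ℕ) (hp : p.Prime) (hf : 1 ≤ f) (hq : q = p ^ f)
    (F : Type) [Field F] [Fintype F] [CharP F p]
    (φq : LaurentSeries F →ₗ[F] LaurentSeries F)
    (hφ1 : ∀ (x : LaurentSeries F) (n : ℤ), (φq x).coeff ((q : ℤ) * n) = x.coeff n)
    (hφ2 : ∀ (x : LaurentSeries F) (m : ℤ), ¬ (q : ℤ) ∣ m → (φq x).coeff m = 0)
    (h : ℕ) (hh : h ≤ q - 2) (lam : Fˣ)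
    (hne : ¬ (h = 0 ∧ (lam : F) = 1)) :
    (∀ x : LaurentSeries F,
      (∀ n : ℤ, ¬ ((q : ℤ) - 1) ∣ n → x.coeff n = 0) →
      (lam : F) • φq x = HahnSeries.single (((q : ℤ) - 1) * h) (1 : F) * x →
      x = 0) ∧
    (∀ y x₁ x₂ : LaurentSeries F,
      (∀ n : ℤ, ¬ ((q : ℤ) - 1) ∣ n → x₁.coeff n = 0) →
      (∀ n : ℤ, ¬ ((q : ℤ) - 1) ∣ n → x₂.coeff n = 0) →
      x₁ - (lam : F) • (HahnSeries.single (-(((q : ℤ) - 1) * h)) (1 : F) * φq x₁) = y →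
      x₂ - (lam : F) • (HahnSeries.single (-(((q : ℤ) - 1) * h)) (1 : F) * φq x₂) = y →
      x₁ = x₂) := by
  have hq1 : 1 < q := hq ▸ Nat.one_lt_pow (Nat.one_le_iff_ne_zero.mp hf) hp.one_lt
  exact statement10_general (by exact_mod_cast hq1) φq hφ1 hφ2 fun ⟨hdvd, hlam⟩ ↦
    hne ⟨by exact_mod_cast Int.eq_zero_of_dvd_of_nonneg_of_lt h.cast_nonneg (by omega) hdvd, hlam⟩
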